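/- arXiv:1804.00677 — 6 statements merged into one kernel-verified Lean document; each statement's English description precedes it below -/
import Mathlib

section
/- Let Γ=(G,H,t,α), Γ'=(G',H',t',α'), Γ''=(G'',H'',t'',α'') be crossed modules of groups, and let F₁=(φ₁,f₁,η₁): Γ → Γ' and F₂=(φ₂,f₂,η₂): Γ' → Γ'' be crossed intertwiners. Then the triple (φ₂∘φ₁, f₂∘f₁, (g,g') ↦ η₂(φ₁(g),φ₁(g'))·f₂(η₁(g,g'))) is a crossed intertwiner from Γ to Γ''; in particular its third component takes values in ker t''. -/
/-- A crossed module of groups `(G, H, t, α)`. -/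
structure CrossedModule (G H : Type*) [Group G] [Group H] where
  t : H →* G
  α : G → H → H
  α_mul : ∀ (g : G) (h h' : H), α g (h * h') = α g h * α g h'
  α_one : ∀ h : H, α 1 h = h
  α_comp : ∀ (g g' : G) (h : H), α (g * g') h = α g (α g' h)
  peiffer₁ : ∀ h h' : H, α (t h) h' = h * h' * h⁻¹
  peiffer₂ : ∀ (g : G) (h : H), t (α g h) = g * t h * g⁻¹

/-- A crossed intertwiner `(φ, f, η)` between crossed modules; `η` takes values in `ker t'`. -/
structure CrossedIntertwiner {G H G' H' : Type*} [Group G] [Group H] [Group G'] [Group H']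
    (Γ : CrossedModule G H) (Γ' : CrossedModule G' H') where
  φ : G →* G'
  f : H →* H'
  η : G → G → H'
  η_mem_ker : ∀ g g' : G, Γ'.t (η g g') = 1
  CI1 : ∀ h : H, φ (Γ.t h) = Γ'.t (f h)
  CI2 : ∀ h h' : H, η (Γ.t h) (Γ.t h') = 1
  CI4 : ∀ (g : G) (h : H),
    η g (Γ.t h * g⁻¹) * f (Γ.α g h) =
      Γ'.α (φ g) (η (Γ.t h * g⁻¹) g) * Γ'.α (φ g) (f h)
  CI5 : ∀ g g' g'' : G,
    η g g' * η (g * g') g'' = Γ'.α (φ g) (η g' g'') * η g (g' * g'')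

namespace CrossedModule

/-!
On `ker t`, the intertwiner `f` is equivariant: for `t u = 1`, axiom CI4 reads
`η(g, g⁻¹) f(α(g, u)) = α'(φ g, η(g⁻¹, g)) α'(φ g, f u)`, and the cocycle identity CI5 at
`(g, g⁻¹, g)` cancels the two `η` factors. Hence `f₂ ∘ η₁` is again a 2-cocycle, and so is its
product with the pullback of `η₂` along `φ₁`, because `ker t''` is central. Axiom CI4 for the
composite is CI4 for `F₂` at the element `η₁(t(h)g⁻¹, g) f₁(h)`, which `t'` sends to `φ₁(t h)`.
-/

variable {G H : Type*} [Group G] [Group H] (Γ : CrossedModule G H)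

theorem commute_of_t_eq_one {u : H} (hu : Γ.t u = 1) (h : H) : Commute u h := by
  have conj_eq : h = u * h * u⁻¹ := by simpa only [hu, Γ.α_one] using Γ.peiffer₁ u h
  exact (eq_mul_inv_iff_mul_eq.mp conj_eq).symm

theorem α_one_right (g : G) : Γ.α g 1 = 1 := by
  simpa using Γ.α_mul g 1 1

end CrossedModule

namespace CrossedIntertwiner

section Basic

variable {G H G' H' : Type*} [Group G] [Group H] [Group G'] [Group H']
  {Γ : CrossedModule G H} {Γ' : CrossedModule G' H'} (F : CrossedIntertwiner Γ Γ')

theorem t_f_eq_one {u : H} (hu : Γ.t u = 1) : Γ'.t (F.f u) = 1 := by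
  rw [← F.CI1, hu, map_one]

theorem η_one_one : F.η 1 1 = 1 := by
  simpa using F.CI2 1 1

theorem η_one_right (g : G) : F.η g 1 = 1 := by
  simpa [F.η_one_one, Γ'.α_one_right] using F.CI5 g 1 1

theorem η_one_left (g : G) : F.η 1 g = 1 := by
  simpa [F.η_one_one, Γ'.α_one] using F.CI5 1 1 g

theorem η_self_inv (g : G) : F.η g g⁻¹ = Γ'.α (F.φ g) (F.η g⁻¹ g) := by
  simpa [F.η_one_left, F.η_one_right] using F.CI5 g g⁻¹ g

theorem f_α_of_t_eq_one (g : G) {u : H} (hu : Γ.t u = 1) :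
    F.f (Γ.α g u) = Γ'.α (F.φ g) (F.f u) := by
  have h := F.CI4 g u
  rw [hu, one_mul, ← F.η_self_inv] at h
  exact mul_left_cancel h

end Basic

section Comp

variable {G H G' H' G'' H'' : Type*} [Group G] [Group H] [Group G'] [Group H']
  [Group G''] [Group H'']
  {Γ : CrossedModule G H} {Γ' : CrossedModule G' H'} {Γ'' : CrossedModule G'' H''}
  (F₂ : CrossedIntertwiner Γ' Γ'') (F₁ : CrossedIntertwiner Γ Γ')

theorem f_η_cocycle (g g' g'' : G) :
    F₂.f (F₁.η g g') * F₂.f (F₁.η (g * g') g'') =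
      Γ''.α (F₂.φ (F₁.φ g)) (F₂.f (F₁.η g' g'')) * F₂.f (F₁.η g (g' * g'')) := by
  rw [← map_mul, F₁.CI5, map_mul, F₂.f_α_of_t_eq_one _ (F₁.η_mem_ker _ _)]

/-- The `η`-component of the composite of two crossed intertwiners `F₁` and `F₂`, in the order of
function composition. -/
def compη (g g' : G) : H'' :=
  F₂.η (F₁.φ g) (F₁.φ g') * F₂.f (F₁.η g g')

theorem t_compη (g g' : G) : Γ''.t (F₂.compη F₁ g g') = 1 := by
  rw [compη, map_mul, F₂.η_mem_ker, F₂.t_f_eq_one (F₁.η_mem_ker g g'), one_mul]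

theorem compη_t_t (h h' : H) : F₂.compη F₁ (Γ.t h) (Γ.t h') = 1 := by
  rw [compη, F₁.CI1, F₁.CI1, F₂.CI2, F₁.CI2, map_one, one_mul]

theorem compη_mul_f_α (g : G) (h : H) :
    F₂.compη F₁ g (Γ.t h * g⁻¹) * F₂.f (F₁.f (Γ.α g h)) =
      Γ''.α (F₂.φ (F₁.φ g)) (F₂.compη F₁ (Γ.t h * g⁻¹) g) *
        Γ''.α (F₂.φ (F₁.φ g)) (F₂.f (F₁.f h)) := by
  set k := F₁.η (Γ.t h * g⁻¹) g * F₁.f h with hk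
  have t_k : Γ'.t k * (F₁.φ g)⁻¹ = F₁.φ (Γ.t h * g⁻¹) := by
    rw [hk, map_mul, F₁.η_mem_ker, one_mul, ← F₁.CI1, map_mul, map_inv]
  have α_k : Γ'.α (F₁.φ g) k = F₁.η g (Γ.t h * g⁻¹) * F₁.f (Γ.α g h) := by
    rw [hk, Γ'.α_mul, ← F₁.CI4]
  calc F₂.compη F₁ g (Γ.t h * g⁻¹) * F₂.f (F₁.f (Γ.α g h))
    _ = F₂.η (F₁.φ g) (Γ'.t k * (F₁.φ g)⁻¹) * F₂.f (Γ'.α (F₁.φ g) k) := by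
      rw [compη, t_k, α_k, map_mul F₂.f, mul_assoc]
    _ = Γ''.α (F₂.φ (F₁.φ g)) (F₂.η (Γ'.t k * (F₁.φ g)⁻¹) (F₁.φ g)) *
          Γ''.α (F₂.φ (F₁.φ g)) (F₂.f k) := F₂.CI4 _ k
    _ = Γ''.α (F₂.φ (F₁.φ g)) (F₂.compη F₁ (Γ.t h * g⁻¹) g) *
          Γ''.α (F₂.φ (F₁.φ g)) (F₂.f (F₁.f h)) := by
      rw [t_k, hk, ← Γ''.α_mul, ← Γ''.α_mul, compη, map_mul F₂.f, mul_assoc]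

theorem compη_cocycle (g g' g'' : G) :
    F₂.compη F₁ g g' * F₂.compη F₁ (g * g') g'' =
      Γ''.α (F₂.φ (F₁.φ g)) (F₂.compη F₁ g' g'') * F₂.compη F₁ g (g' * g'') := by
  have η_central (x y : G') (k : H'') : Commute k (F₂.η x y) :=
    (Γ''.commute_of_t_eq_one (F₂.η_mem_ker x y) k).symm
  simp only [compη, map_mul F₁.φ, Γ''.α_mul]
  rw [(η_central _ _ _).mul_mul_mul_comm, F₂.CI5, F₂.f_η_cocycle F₁,
    (η_central _ _ _).mul_mul_mul_comm]

/-- The composite `F₂ ∘ F₁` of crossed intertwiners, in the order of function composition. -/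
def comp : CrossedIntertwiner Γ Γ'' where
  φ := F₂.φ.comp F₁.φ
  f := F₂.f.comp F₁.f
  η := F₂.compη F₁
  η_mem_ker := F₂.t_compη F₁
  CI1 h := by simp only [MonoidHom.comp_apply, F₁.CI1, F₂.CI1]
  CI2 := F₂.compη_t_t F₁
  CI4 := F₂.compη_mul_f_α F₁
  CI5 := F₂.compη_cocycle F₁

end Comp

end CrossedIntertwiner

/-- the composite of two crossed intertwiners, given by
`(φ₂∘φ₁, f₂∘f₁, (g,g') ↦ η₂(φ₁(g),φ₁(g'))·f₂(η₁(g,g')))`, is again a crossed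
intertwiner (in particular its third component takes values in `ker t''`). -/
theorem composition_of_crossed_intertwiners
    {G H G' H' G'' H'' : Type*} [Group G] [Group H] [Group G'] [Group H']
    [Group G''] [Group H'']
    {Γ : CrossedModule G H} {Γ' : CrossedModule G' H'} {Γ'' : CrossedModule G'' H''}
    (F₁ : CrossedIntertwiner Γ Γ') (F₂ : CrossedIntertwiner Γ' Γ'') :
    ∃ F : CrossedIntertwiner Γ Γ'',
      F.φ = F₂.φ.comp F₁.φ ∧ F.f = F₂.f.comp F₁.f ∧
      ∀ g g' : G, F.η g g' = F₂.η (F₁.φ g) (F₁.φ g') * F₂.f (F₁.η g g') :=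
  ⟨F₂.comp F₁, rfl, rfl, fun _ _ => rfl⟩
end

section
/- The triple flip = (φ, f, η) with φ(a⊕â) := â⊕a, f(m⊕m̂, s) := (m̂⊕m, s), and η(x,x') := (0, [x,x'] mod ℤ) is a crossed intertwiner from TD[n] to itself: (CI1) φ(t(h)) = t(f(h)); (CI2) η(t(h), t(h')) = 0; (CI4) η(x, t(h)−x) + f(α(x,h)) = η(t(h)−x, x) + α(φ(x), f(h)); (CI5) η(x,x') + η(x+x', x'') = η(x',x'') + η(x, x'+x'') hold for all x,x',x'' ∈ ℝ^{2n} and h,h' ∈ ℤ^{2n} × 𝕋. (Here the action α of ℝ^{2n} on the kernel {0} × 𝕋 of t is trivial, so the general crossed intertwiner axioms CI4 and CI5 take the stated form.) -/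
noncomputable section

/-- The additive circle `𝕋 := ℝ/ℤ`. -/
abbrev Torus : Type := AddCircle (1 : ℝ)

/-- `G = ℝ^{2n}`, written as pairs `a ⊕ â` with `a, â ∈ ℝⁿ`. -/
abbrev TDG (n : ℕ) : Type := (Fin n → ℝ) × (Fin n → ℝ)

/-- `H = ℤ^{2n} × 𝕋`. -/
abbrev TDH (n : ℕ) : Type := ((Fin n → ℤ) × (Fin n → ℤ)) × Torus

/-- The pairing `[x,y] := Σ_{i=1}^{n} x_{n+i} · y_i`, i.e. `[a₁⊕â₁, a₂⊕â₂] = â₁·a₂`. -/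
def TDpair {n : ℕ} (x y : TDG n) : ℝ := ∑ i, x.2 i * y.1 i

/-- `t(z,s) := z ∈ ℝ^{2n}`. -/
def TDt {n : ℕ} (h : TDH n) : TDG n :=
  (fun i => (h.1.1 i : ℝ), fun i => (h.1.2 i : ℝ))

/-- `α(x,(z,s)) := (z, s − [x,z] mod ℤ)`. -/
def TDα {n : ℕ} (x : TDG n) (h : TDH n) : TDH n :=
  (h.1, h.2 - ((TDpair x (TDt h) : ℝ) : Torus))

/-- `φ(a⊕â) := â⊕a`. -/
def flipφ {n : ℕ} (x : TDG n) : TDG n := (x.2, x.1)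

/-- `f(m⊕m̂, s) := (m̂⊕m, s)`. -/
def flipf {n : ℕ} (h : TDH n) : TDH n := ((h.1.2, h.1.1), h.2)

/-- `η(x,x') := (0, [x,x'] mod ℤ)`. -/
def flipη {n : ℕ} (x x' : TDG n) : TDH n := ((0, 0), ((TDpair x x' : ℝ) : Torus))

/-! The form `[x,y] = â₁·a₂` is biadditive and integral on `ℤ^{2n}`, and swapping the two halves of
`ℝ^{2n}` turns it into its transpose. Biadditivity makes `η` a 2-cocycle (CI5), and integrality
makes it vanish on `ℤ^{2n}` (CI2). Since `α(x,h) = h − η(x,t(h))` and `f` fixes the values of `η`,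
both sides of (CI4) reduce to `f(h) − η(x,x)`. -/

section Flip

variable {n : ℕ}

theorem TDpair_eq_dotProduct (x y : TDG n) : TDpair x y = x.2 ⬝ᵥ y.1 := rfl

theorem TDpair_flipφ_flipφ (x y : TDG n) : TDpair (flipφ x) (flipφ y) = TDpair y x :=
  dotProduct_comm x.1 y.2

theorem TDpair_TDt_TDt (h h' : TDH n) :
    TDpair (TDt h) (TDt h') = ((h.1.2 ⬝ᵥ h'.1.1 : ℤ) : ℝ) :=
  ((Int.castRingHom ℝ).map_dotProduct h.1.2 h'.1.1).symm

theorem flipφ_add (x y : TDG n) : flipφ (x + y) = flipφ x + flipφ y := rfl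

theorem flipf_add (h k : TDH n) : flipf (h + k) = flipf h + flipf k := rfl

theorem flipf_sub (h k : TDH n) : flipf (h - k) = flipf h - flipf k := rfl

theorem flipφ_TDt (h : TDH n) : flipφ (TDt h) = TDt (flipf h) := rfl

theorem TDt_flipη (x y : TDG n) : TDt (flipη x y) = 0 := by
  ext <;> exact Int.cast_zero

theorem flipf_flipη (x y : TDG n) : flipf (flipη x y) = flipη x y := rfl

theorem flipη_add_left (x y z : TDG n) : flipη (x + y) z = flipη x z + flipη y z := by
  simp [flipη, TDpair_eq_dotProduct, add_dotProduct]

theorem flipη_add_right (x y z : TDG n) : flipη x (y + z) = flipη x y + flipη x z := by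
  simp [flipη, TDpair_eq_dotProduct, dotProduct_add]

theorem flipη_sub_left (x y z : TDG n) : flipη (x - y) z = flipη x z - flipη y z := by
  simp [flipη, TDpair_eq_dotProduct, sub_dotProduct]

theorem flipη_sub_right (x y z : TDG n) : flipη x (y - z) = flipη x y - flipη x z := by
  simp [flipη, TDpair_eq_dotProduct, dotProduct_sub]

theorem flipη_flipφ_flipφ (x y : TDG n) : flipη (flipφ x) (flipφ y) = flipη y x := by
  simp only [flipη, TDpair_flipφ_flipφ]

theorem flipη_TDt_TDt (h h' : TDH n) : flipη (TDt h) (TDt h') = 0 := by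
  have pairing_mod_one : ((TDpair (TDt h) (TDt h') : ℝ) : Torus) = 0 :=
    (AddCircle.coe_eq_zero_iff 1).mpr
      ⟨h.1.2 ⬝ᵥ h'.1.1, by rw [TDpair_TDt_TDt, zsmul_one]⟩
  exact Prod.ext rfl pairing_mod_one

theorem TDα_eq_sub_flipη (x : TDG n) (h : TDH n) : TDα x h = h - flipη x (TDt h) :=
  Prod.ext (sub_zero h.1).symm rfl

theorem flipf_TDα (x : TDG n) (h : TDH n) : flipf (TDα x h) = flipf h - flipη x (TDt h) := by
  rw [TDα_eq_sub_flipη, flipf_sub, flipf_flipη]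

theorem TDα_flipφ_flipf (x : TDG n) (h : TDH n) :
    TDα (flipφ x) (flipf h) = flipf h - flipη (TDt h) x := by
  rw [TDα_eq_sub_flipη, ← flipφ_TDt, flipη_flipφ_flipφ]

theorem flipη_TDt_sub_add_flipf_TDα (x : TDG n) (h : TDH n) :
    flipη x (TDt h - x) + flipf (TDα x h) =
      flipη (TDt h - x) x + TDα (flipφ x) (flipf h) :=
  calc
    flipη x (TDt h - x) + flipf (TDα x h) = flipf h - flipη x x := by
      rw [flipη_sub_right, flipf_TDα]; abel
    _ = flipη (TDt h - x) x + TDα (flipφ x) (flipf h) := by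
      rw [flipη_sub_left, TDα_flipφ_flipf]; abel

theorem flipη_cocycle (x y z : TDG n) :
    flipη x y + flipη (x + y) z = flipη y z + flipη x (y + z) := by
  rw [flipη_add_left, flipη_add_right]; abel

end Flip

/-- `flip = (φ, f, η)` is a crossed intertwiner from `TD[n]` to itself:
`φ` and `f` are additive homomorphisms, `η` takes values in `ker t`, and the
axioms (CI1) `φ(t(h)) = t(f(h))`, (CI2) `η(t(h),t(h')) = 0`,
(CI4) `η(x, t(h)−x) + f(α(x,h)) = η(t(h)−x, x) + α(φ(x), f(h))`, and
(CI5) `η(x,x') + η(x+x',x'') = η(x',x'') + η(x, x'+x'')` hold (the action of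
`ℝ^{2n}` on `ker t = {0} × 𝕋` being trivial). -/
theorem flip_is_crossed_intertwiner (n : ℕ) (hn : 1 ≤ n) :
    (∀ x x' : TDG n, flipφ (x + x') = flipφ x + flipφ x') ∧
    (∀ h h' : TDH n, flipf (h + h') = flipf h + flipf h') ∧
    (∀ x x' : TDG n, TDt (flipη x x') = 0) ∧
    (∀ h : TDH n, flipφ (TDt h) = TDt (flipf h)) ∧
    (∀ h h' : TDH n, flipη (TDt h) (TDt h') = 0) ∧
    (∀ (x : TDG n) (h : TDH n),
        flipη x (TDt h - x) + flipf (TDα x h) =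
          flipη (TDt h - x) x + TDα (flipφ x) (flipf h)) ∧
    (∀ x x' x'' : TDG n,
        flipη x x' + flipη (x + x') x'' = flipη x' x'' + flipη x (x' + x'')) :=
  ⟨flipφ_add, flipf_add, TDt_flipη, flipφ_TDt, flipη_TDt_TDt, flipη_TDt_sub_add_flipf_TDα,
    flipη_cocycle⟩
end
end

section
/- For every skew-symmetric n×n integer matrix B, the triple F_{e^B} = (φ_{e^B}, f_{e^B}, η_{e^B}) with φ_{e^B}(a⊕â) := a ⊕ (Ba + â), f_{e^B}(m⊕m̂, s) := (m ⊕ (Bm + m̂), s), and η_{e^B}(a⊕â, b⊕b̂) := (0, ⌊a|B|b⌋ mod ℤ) is a crossed intertwiner from TD[n] to itself, i.e. axioms CI1, CI2, CI4 and CI5 hold (CI2 uses that ⌊m|B|m'⌋ ∈ ℤ for integer vectors m, m', and CI4 uses the skew-symmetry of B). -/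
open Matrix

noncomputable section

/-- `⌊v|B|w⌋ := Σ_{i>j} B_{ij} vᵢ wⱼ` (pairing with the strictly lower-triangular
part of the skew-symmetric matrix `B`). -/
def lbrak {n : ℕ} (B : Matrix (Fin n) (Fin n) ℤ) (v w : Fin n → ℝ) : ℝ :=
  ∑ i, ∑ j, if j < i then (B i j : ℝ) * v i * w j else 0

/-- `φ_{e^B}(a⊕â) := a ⊕ (Ba + â)`. -/
def eBφ {n : ℕ} (B : Matrix (Fin n) (Fin n) ℤ) (x : TDG n) : TDG n :=
  (x.1, fun i => (∑ j, (B i j : ℝ) * x.1 j) + x.2 i)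

/-- `f_{e^B}(m⊕m̂, s) := (m ⊕ (Bm + m̂), s)`. -/
def eBf {n : ℕ} (B : Matrix (Fin n) (Fin n) ℤ) (h : TDH n) : TDH n :=
  ((h.1.1, fun i => (∑ j, B i j * h.1.1 j) + h.1.2 i), h.2)

/-- `η_{e^B}(a⊕â, b⊕b̂) := (0, ⌊a|B|b⌋ mod ℤ)`. -/
def eBη {n : ℕ} (B : Matrix (Fin n) (Fin n) ℤ) (x x' : TDG n) : TDH n :=
  ((0, 0), ((lbrak B x.1 x'.1 : ℝ) : Torus))

/-! With `L` the strictly lower-triangular part of `B`, the bracket `⌊v|B|w⌋` is the bilinear form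
`vᵀ L w`. As `B = L - Lᵀ`, antisymmetrizing it gives `vᵀ B w`, which is exactly the amount by which
`f_{e^B}` fails to intertwine the actions along `φ_{e^B}`: this is CI4. Since `α` fixes `ker t`
pointwise, CI5 says that `η_{e^B}` is a 2-cocycle, which holds because it is biadditive. -/

section StrictLower

variable {ι R : Type*}

/-- The strictly lower-triangular part of a square matrix, written `B_low` in the paper. -/
def strictLower [LT ι] [DecidableLT ι] [Zero R] (B : Matrix ι ι R) : Matrix ι ι R :=
  of fun i j => if j < i then B i j else 0

theorem strictLower_sub_transpose [LinearOrder ι] [AddGroup R] [IsAddTorsionFree R]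
    {B : Matrix ι ι R} (hB : Bᵀ = -B) : strictLower B - (strictLower B)ᵀ = B := by
  have skew (i j : ι) : B j i = -B i j := congrFun₂ hB i j
  ext i j
  rcases lt_trichotomy i j with h | rfl | h
  · simp [strictLower, h, h.not_gt, skew i j]
  · simp [strictLower, self_eq_neg.mp (skew i i)]
  · simp [strictLower, h, h.not_gt]

theorem dotProduct_sub_transpose_mulVec [Fintype ι] [NonUnitalCommRing R]
    (L : Matrix ι ι R) (v w : ι → R) :
    v ⬝ᵥ (L - Lᵀ) *ᵥ w = v ⬝ᵥ L *ᵥ w - w ⬝ᵥ L *ᵥ v := by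
  rw [sub_mulVec, dotProduct_sub, dotProduct_mulVec v Lᵀ, vecMul_transpose, dotProduct_comm _ w]

end StrictLower

section CrossedIntertwiner

variable {n : ℕ} (B : Matrix (Fin n) (Fin n) ℤ)

theorem TDα_of_TDt_eq_zero (x : TDG n) {h : TDH n} (hh : TDt h = 0) : TDα x h = h := by
  simp [TDα, TDpair, hh]

theorem lbrak_eq_dotProduct_mulVec (v w : Fin n → ℝ) :
    lbrak B v w = v ⬝ᵥ (strictLower B).map Int.cast *ᵥ w := by
  simp only [lbrak, dotProduct, mulVec, strictLower, map_apply, of_apply, Finset.mul_sum]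
  refine Finset.sum_congr rfl fun i _ => Finset.sum_congr rfl fun j _ => ?_
  split_ifs
  · ring
  · simp

theorem lbrak_add_left (u v w : Fin n → ℝ) :
    lbrak B (u + v) w = lbrak B u w + lbrak B v w := by
  simp only [lbrak_eq_dotProduct_mulVec, add_dotProduct]

theorem lbrak_add_right (u v w : Fin n → ℝ) :
    lbrak B u (v + w) = lbrak B u v + lbrak B u w := by
  simp only [lbrak_eq_dotProduct_mulVec, mulVec_add, dotProduct_add]

theorem lbrak_intCast (v w : Fin n → ℤ) :
    lbrak B (fun i => (v i : ℝ)) (fun i => (w i : ℝ)) = (v ⬝ᵥ strictLower B *ᵥ w : ℤ) := by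
  simp [lbrak_eq_dotProduct_mulVec, dotProduct, mulVec]

variable {B} in
theorem lbrak_sub_lbrak_swap (hB : Bᵀ = -B) (v w : Fin n → ℝ) :
    lbrak B v w - lbrak B w v = v ⬝ᵥ B.map Int.cast *ᵥ w := by
  have map_eq : (B.map Int.cast : Matrix (Fin n) (Fin n) ℝ) =
      (strictLower B).map Int.cast - ((strictLower B).map Int.cast)ᵀ := by
    rw [← transpose_map, ← Matrix.map_sub _ Int.cast_sub, strictLower_sub_transpose hB]
  rw [map_eq, dotProduct_sub_transpose_mulVec, lbrak_eq_dotProduct_mulVec,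
    lbrak_eq_dotProduct_mulVec]

theorem eBφ_eq_mulVec (x : TDG n) : eBφ B x = (x.1, B.map Int.cast *ᵥ x.1 + x.2) :=
  rfl

theorem eBf_eq_mulVec (h : TDH n) : eBf B h = ((h.1.1, B *ᵥ h.1.1 + h.1.2), h.2) :=
  rfl

theorem eBφ_add (x y : TDG n) : eBφ B (x + y) = eBφ B x + eBφ B y := by
  simp only [eBφ_eq_mulVec, Prod.fst_add, Prod.snd_add, mulVec_add, Prod.mk_add_mk,
    add_add_add_comm]

theorem eBf_add (h k : TDH n) : eBf B (h + k) = eBf B h + eBf B k := by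
  simp only [eBf_eq_mulVec, Prod.fst_add, Prod.snd_add, mulVec_add, Prod.mk_add_mk,
    add_add_add_comm]

theorem eBφ_TDt (h : TDH n) : eBφ B (TDt h) = TDt (eBf B h) := by
  simp [eBφ, TDt, eBf]

theorem TDt_eBη (x y : TDG n) : TDt (eBη B x y) = 0 := by
  ext <;> simp [TDt, eBη]

theorem eBη_add_left (x y z : TDG n) : eBη B (x + y) z = eBη B x z + eBη B y z := by
  simp [eBη, lbrak_add_left]

theorem eBη_add_right (x y z : TDG n) : eBη B x (y + z) = eBη B x y + eBη B x z := by
  simp [eBη, lbrak_add_right]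

theorem eBη_sub_left (x y z : TDG n) : eBη B (x - y) z = eBη B x z - eBη B y z :=
  (AddMonoidHom.mk' (eBη B · z) (eBη_add_left B · · z)).map_sub x y

theorem eBη_sub_right (x y z : TDG n) : eBη B x (y - z) = eBη B x y - eBη B x z :=
  (AddMonoidHom.mk' (eBη B x) (eBη_add_right B x)).map_sub y z

theorem eBη_TDt_TDt (h k : TDH n) : eBη B (TDt h) (TDt k) = 0 := by
  have integral : ((lbrak B (TDt h).1 (TDt k).1 : ℝ) : Torus) = 0 := by
    rw [AddCircle.coe_eq_zero_iff]
    exact ⟨h.1.1 ⬝ᵥ strictLower B *ᵥ k.1.1, by simp [TDt, lbrak_intCast]⟩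
  exact Prod.ext rfl integral

variable {B} in
theorem eBη_sub_eBη_swap (hB : Bᵀ = -B) (x y : TDG n) :
    eBη B x y - eBη B y x = (0, ((x.1 ⬝ᵥ B.map Int.cast *ᵥ y.1 : ℝ) : Torus)) := by
  rw [← lbrak_sub_lbrak_swap hB, AddCircle.coe_sub]
  simp [eBη]

theorem TDpair_eBφ_TDt_eBf (x : TDG n) (h : TDH n) :
    TDpair (eBφ B x) (TDt (eBf B h)) =
      (TDt h).1 ⬝ᵥ B.map Int.cast *ᵥ x.1 + TDpair x (TDt h) := by
  rw [dotProduct_comm]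
  exact add_dotProduct _ _ _

theorem eBf_TDα (x : TDG n) (h : TDH n) :
    eBf B (TDα x h) = TDα (eBφ B x) (eBf B h) +
      (0, (((TDt h).1 ⬝ᵥ B.map Int.cast *ᵥ x.1 : ℝ) : Torus)) := by
  rw [TDα, TDα, TDpair_eBφ_TDt_eBf, AddCircle.coe_add]
  refine Prod.ext (add_zero _).symm ?_
  simp only [eBf, Prod.snd_add]
  abel

variable {B} in
theorem eBη_add_eBf_TDα (hB : Bᵀ = -B) (x : TDG n) (h : TDH n) :
    eBη B x (TDt h - x) + eBf B (TDα x h) =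
      eBη B (TDt h - x) x + TDα (eBφ B x) (eBf B h) := by
  rw [eBf_TDα, ← eBη_sub_eBη_swap hB, eBη_sub_left, eBη_sub_right]
  abel

theorem eBη_cocycle (x y z : TDG n) :
    eBη B x y + eBη B (x + y) z = eBη B y z + eBη B x (y + z) := by
  rw [eBη_add_left, eBη_add_right]
  abel

end CrossedIntertwiner

/-- for every skew-symmetric `n×n` integer matrix `B`, the triple
`F_{e^B} = (φ_{e^B}, f_{e^B}, η_{e^B})` is a crossed intertwiner from `TD[n]` to
itself: `φ_{e^B}` and `f_{e^B}` are additive homomorphisms, `η_{e^B}` takes values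
in `ker t`, and the axioms CI1, CI2, CI4 and CI5 hold. -/
theorem eB_is_crossed_intertwiner (n : ℕ) (hn : 1 ≤ n)
    (B : Matrix (Fin n) (Fin n) ℤ) (hB : Bᵀ = -B) :
    (∀ x x' : TDG n, eBφ B (x + x') = eBφ B x + eBφ B x') ∧
    (∀ h h' : TDH n, eBf B (h + h') = eBf B h + eBf B h') ∧
    (∀ x x' : TDG n, TDt (eBη B x x') = 0) ∧
    (∀ h : TDH n, eBφ B (TDt h) = TDt (eBf B h)) ∧
    (∀ h h' : TDH n, eBη B (TDt h) (TDt h') = 0) ∧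
    (∀ (x : TDG n) (h : TDH n),
        eBη B x (TDt h - x) + eBf B (TDα x h) =
          TDα (eBφ B x) (eBη B (TDt h - x) x) + TDα (eBφ B x) (eBf B h)) ∧
    (∀ x x' x'' : TDG n,
        eBη B x x' + eBη B (x + x') x'' =
          TDα (eBφ B x) (eBη B x' x'') + eBη B x (x' + x'')) := by
  refine ⟨eBφ_add B, eBf_add B, TDt_eBη B, eBφ_TDt B, eBη_TDt_TDt B, fun x h => ?ci4,
    fun x x' x'' => ?ci5⟩
  case ci4 => rw [TDα_of_TDt_eq_zero _ (TDt_eBη B _ _), eBη_add_eBf_TDα hB]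
  case ci5 => rw [TDα_of_TDt_eq_zero _ (TDt_eBη B _ _), eBη_cocycle]
end
end

section
/- For all B₁, B₂ ∈ 𝔰𝔬(n,ℤ), under the composition formula for crossed intertwiners one has F_{e^{B₂}} ∘ F_{e^{B₁}} = F_{e^{B₁+B₂}} (componentwise: φ_{e^{B₂}}∘φ_{e^{B₁}} = φ_{e^{B₁+B₂}}, f_{e^{B₂}}∘f_{e^{B₁}} = f_{e^{B₁+B₂}}, and η_{e^{B₂}}(φ_{e^{B₁}}(x), φ_{e^{B₁}}(x')) + f_{e^{B₂}}(η_{e^{B₁}}(x,x')) = η_{e^{B₁+B₂}}(x,x')), and F_{e^0} is the identity crossed intertwiner. Hence B ↦ F_{e^B} is an action of the additive group 𝔰𝔬(n,ℤ) on TD[n] by crossed intertwiners. -/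
open Matrix

noncomputable section

/-! The maps `φ_{e^B}` and `f_{e^B}` are shears by `B`, over `ℝ` and `ℤ` respectively, and shears
with the same axis compose by adding their matrices. A shear does not move the first component, on
which alone `η_{e^B}` depends, and `f_{e^B}` fixes `{0} × 𝕋`, where `η_{e^B}` takes its values; so
the composition law for `η` reduces to the additivity of `⌊v|B|w⌋` in `B`. -/

section Shear

variable {R ι κ : Type*} [NonUnitalNonAssocSemiring R] [Fintype κ]

/-- The shear `(v, w) ↦ (v, A v + w)` of `R^κ × R^ι` by an `ι × κ` matrix `A`, the common shape of
`φ_{e^B}` and of the lattice part of `f_{e^B}`. -/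
def shear (A : Matrix ι κ R) (x : (κ → R) × (ι → R)) : (κ → R) × (ι → R) :=
  (x.1, A *ᵥ x.1 + x.2)

theorem shear_shear (A B : Matrix ι κ R) (x : (κ → R) × (ι → R)) :
    shear B (shear A x) = shear (A + B) x := by
  simp only [shear, add_mulVec, add_assoc, add_left_comm]

theorem shear_zero_left (x : (κ → R) × (ι → R)) : shear (0 : Matrix ι κ R) x = x := by
  simp [shear]

theorem shear_zero_right (A : Matrix ι κ R) : shear A 0 = 0 := by
  simp [shear]

end Shear

section TorusDuality

variable {n : ℕ}

theorem lbrak_add (B C : Matrix (Fin n) (Fin n) ℤ) (v w : Fin n → ℝ) :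
    lbrak (B + C) v w = lbrak B v w + lbrak C v w := by
  simp only [lbrak, Matrix.add_apply, Int.cast_add, add_mul, ite_add_zero, Finset.sum_add_distrib]

theorem lbrak_zero (v w : Fin n → ℝ) : lbrak 0 v w = 0 := by
  simp [lbrak]

theorem eBφ_eq_shear (B : Matrix (Fin n) (Fin n) ℤ) (x : TDG n) :
    eBφ B x = shear (B.map ((↑) : ℤ → ℝ)) x :=
  rfl

theorem eBφ_eBφ (B C : Matrix (Fin n) (Fin n) ℤ) (x : TDG n) :
    eBφ C (eBφ B x) = eBφ (B + C) x := by
  simp only [eBφ_eq_shear, shear_shear, Matrix.map_add _ Int.cast_add]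

theorem eBφ_zero (x : TDG n) : eBφ 0 x = x := by
  rw [eBφ_eq_shear, Matrix.map_zero _ Int.cast_zero, shear_zero_left]

theorem eBf_eq_shear (B : Matrix (Fin n) (Fin n) ℤ) (h : TDH n) :
    eBf B h = (shear B h.1, h.2) :=
  rfl

theorem eBf_eBf (B C : Matrix (Fin n) (Fin n) ℤ) (h : TDH n) :
    eBf C (eBf B h) = eBf (B + C) h := by
  simp only [eBf_eq_shear, shear_shear]

theorem eBf_zero (h : TDH n) : eBf 0 h = h := by
  rw [eBf_eq_shear, shear_zero_left]

theorem eBf_zero_mk (B : Matrix (Fin n) (Fin n) ℤ) (s : Torus) : eBf B (0, s) = (0, s) := by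
  rw [eBf_eq_shear, shear_zero_right]

theorem eBη_add (B C : Matrix (Fin n) (Fin n) ℤ) (x x' : TDG n) :
    eBη (B + C) x x' = eBη B x x' + eBη C x x' := by
  simp [eBη, lbrak_add]

theorem eBη_zero (x x' : TDG n) : eBη 0 x x' = 0 := by
  simp [eBη, lbrak_zero]

theorem eBη_eBφ (B C : Matrix (Fin n) (Fin n) ℤ) (x x' : TDG n) :
    eBη C (eBφ B x) (eBφ B x') = eBη C x x' :=
  rfl

theorem eBf_eBη (B C : Matrix (Fin n) (Fin n) ℤ) (x x' : TDG n) :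
    eBf C (eBη B x x') = eBη B x x' :=
  eBf_zero_mk C _

theorem eBη_comp (B C : Matrix (Fin n) (Fin n) ℤ) (x x' : TDG n) :
    eBη C (eBφ B x) (eBφ B x') + eBf C (eBη B x x') = eBη (B + C) x x' := by
  rw [eBη_eBφ, eBf_eBη, eBη_add, add_comm]

theorem eB_is_so_n_Z_action_general (B₁ B₂ : Matrix (Fin n) (Fin n) ℤ) :
    (∀ x : TDG n, eBφ B₂ (eBφ B₁ x) = eBφ (B₁ + B₂) x) ∧
    (∀ h : TDH n, eBf B₂ (eBf B₁ h) = eBf (B₁ + B₂) h) ∧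
    (∀ x x' : TDG n,
        eBη B₂ (eBφ B₁ x) (eBφ B₁ x') + eBf B₂ (eBη B₁ x x') = eBη (B₁ + B₂) x x') ∧
    (∀ x : TDG n, eBφ (0 : Matrix (Fin n) (Fin n) ℤ) x = x) ∧
    (∀ h : TDH n, eBf (0 : Matrix (Fin n) (Fin n) ℤ) h = h) ∧
    (∀ x x' : TDG n, eBη (0 : Matrix (Fin n) (Fin n) ℤ) x x' = 0) :=
  ⟨eBφ_eBφ B₁ B₂, eBf_eBf B₁ B₂, eBη_comp B₁ B₂, eBφ_zero, eBf_zero, eBη_zero⟩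

end TorusDuality

/-- under the composition formula for crossed intertwiners,
`F_{e^{B₂}} ∘ F_{e^{B₁}} = F_{e^{B₁+B₂}}` componentwise, and `F_{e^0}` is the
identity crossed intertwiner; hence `B ↦ F_{e^B}` is an action of the additive
group `𝔰𝔬(n,ℤ)` on `TD[n]` by crossed intertwiners. -/
theorem eB_is_so_n_Z_action (n : ℕ) (hn : 1 ≤ n)
    (B₁ B₂ : Matrix (Fin n) (Fin n) ℤ) (hB₁ : B₁ᵀ = -B₁) (hB₂ : B₂ᵀ = -B₂) :
    (∀ x : TDG n, eBφ B₂ (eBφ B₁ x) = eBφ (B₁ + B₂) x) ∧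
    (∀ h : TDH n, eBf B₂ (eBf B₁ h) = eBf (B₁ + B₂) h) ∧
    (∀ x x' : TDG n,
        eBη B₂ (eBφ B₁ x) (eBφ B₁ x') + eBf B₂ (eBη B₁ x x') = eBη (B₁ + B₂) x x') ∧
    (∀ x : TDG n, eBφ (0 : Matrix (Fin n) (Fin n) ℤ) x = x) ∧
    (∀ h : TDH n, eBf (0 : Matrix (Fin n) (Fin n) ℤ) h = h) ∧
    (∀ x x' : TDG n, eBη (0 : Matrix (Fin n) (Fin n) ℤ) x x' = 0) :=
  eB_is_so_n_Z_action_general B₁ B₂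
end
end

section
/- The triple releR = (φ, f, 0) with φ(a⊕â) := â and f(m⊕m̂, s) := (τ_{s,m}, m̂) is a strict crossed intertwiner TD[n] → TBFFR[n]: φ(t(h)) = t'(f(h)) and f(α(x,h)) = α'(φ(x), f(h)) for all x ∈ ℝ^{2n} and h ∈ ℤ^{2n} × 𝕋; pointwise the latter reads s − â·m + m·c = s + m·(c − â) in 𝕋 for all c ∈ 𝕋ⁿ. Moreover the composite releR ∘ flip, computed with the composition formula for crossed intertwiners, equals the triple leleR given by φ(a⊕â) = a, f(m⊕m̂, s) = (τ_{s,m̂}, m), and η(a₁⊕â₁, a₂⊕â₂) = (the constant map with value â₁·a₂ mod ℤ, 0). -/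
noncomputable section

/-- Elements of `H'` of `TBFFR[n]`: pairs of a map `τ : 𝕋ⁿ → 𝕋` and `m ∈ ℤⁿ`. -/
abbrev TBH (n : ℕ) : Type := ((Fin n → Torus) → Torus) × (Fin n → ℤ)

/-- `t'(τ, m) := m ∈ ℝⁿ` of `TBFFR[n]`. -/
def TBt {n : ℕ} (h : TBH n) : Fin n → ℝ := fun i => (h.2 i : ℝ)

/-- `α'(g,(τ,m)) := (c ↦ τ(c − g), m)` of `TBFFR[n]`. -/
def TBα {n : ℕ} (g : Fin n → ℝ) (h : TBH n) : TBH n :=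
  (fun c => h.1 (c - fun i => ((g i : ℝ) : Torus)), h.2)

/-- `releR`: `φ(a⊕â) := â`. -/
def releRφ {n : ℕ} (x : TDG n) : Fin n → ℝ := x.2

/-- `releR`: `f(m⊕m̂, s) := (τ_{s,m}, m̂)`, where `τ_{s,m}(c) := s + m·c`. -/
def releRf {n : ℕ} (h : TDH n) : TBH n :=
  (fun c => h.2 + ∑ i, h.1.1 i • c i, h.1.2)

/-- `leleR`: `φ(a⊕â) := a`. -/
def leleRφ {n : ℕ} (x : TDG n) : Fin n → ℝ := x.1

/-- `leleR`: `f(m⊕m̂, s) := (τ_{s,m̂}, m)`, where `τ_{s,m̂}(c) := s + m̂·c`. -/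
def leleRf {n : ℕ} (h : TDH n) : TBH n :=
  (fun c => h.2 + ∑ i, h.1.2 i • c i, h.1.1)

/-- `leleR`: `η(a₁⊕â₁, a₂⊕â₂) := (the constant map with value â₁·a₂ mod ℤ, 0)`. -/
def leleRη {n : ℕ} (x x' : TDG n) : TBH n :=
  (fun _ => ((TDpair x x' : ℝ) : Torus), 0)

/-!
On the first components, `releR` takes values in the affine forms `τ_{s,m} : c ↦ s + m·c`, which
depend additively on `(s, m)`. Translating the argument by `g` only shifts the constant term,
`s + m·(c − g) = (s − m·g) + m·c`, which is equivariance because `[a ⊕ â, m ⊕ m̂] = â·m`.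
Finally `τ_{s,0}` is constant with value `s`, so `releR` carries the `η₀` of `flip` to that of
`leleR`.
-/

section AffineForm

variable {ι R M : Type*} [Fintype ι]

/-- The affine form `c ↦ s + m·c` with constant term `s` and coefficients `m`. It is the map
`τ_{s,m}` for `R = ℤ` and `M = 𝕋`; since `𝕋` is not a ring, `m·c` is formed with the scalar
action of `R` on `M`. -/
def affineForm [AddCommMonoid M] [SMul R M] (s : M) (m : ι → R) (c : ι → M) : M :=
  s + ∑ i, m i • c i

theorem affineForm_add [AddCommMonoid M] [Semiring R] [Module R M] (s s' : M) (m m' : ι → R) :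
    affineForm (s + s') (m + m') = affineForm s m + affineForm s' m' := by
  ext c
  simp only [affineForm, Pi.add_apply, add_smul, Finset.sum_add_distrib]
  exact add_add_add_comm _ _ _ _

theorem affineForm_zero_right [AddCommMonoid M] [Zero R] [SMulWithZero R M] (s : M) :
    affineForm s (0 : ι → R) = Function.const (ι → M) s := by
  ext c
  simp only [affineForm, Pi.zero_apply, zero_smul, Finset.sum_const_zero, add_zero,
    Function.const_apply]

theorem affineForm_apply_sub [AddCommGroup M] [DistribSMul R M]
    (s : M) (m : ι → R) (c g : ι → M) :
    affineForm s m (c - g) = affineForm (s - ∑ i, m i • g i) m c := by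
  simp only [affineForm, Pi.sub_apply, smul_sub, Finset.sum_sub_distrib]
  abel

end AffineForm

section ReleR

variable {n : ℕ}

theorem releRf_eq_affineForm (h : TDH n) : releRf h = (affineForm h.2 h.1.1, h.1.2) := rfl

theorem releRf_add (h h' : TDH n) : releRf (h + h') = releRf h + releRf h' := by
  simp only [releRf_eq_affineForm, Prod.fst_add, Prod.snd_add, affineForm_add, Prod.mk_add_mk]

theorem TDpair_TDt (x : TDG n) (h : TDH n) : TDpair x (TDt h) = ∑ i, h.1.1 i • x.2 i := by
  simp only [TDpair, TDt, zsmul_eq_mul, mul_comm]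

theorem coe_TDpair_TDt (x : TDG n) (h : TDH n) :
    (TDpair x (TDt h) : Torus) = ∑ i, h.1.1 i • (x.2 i : Torus) := by
  simp only [TDpair_TDt, ← AddCircle.coe_zsmul]
  exact map_sum (QuotientAddGroup.mk' (AddSubgroup.zmultiples (1 : ℝ))) _ _

theorem TBα_affineForm (g : Fin n → ℝ) (s : Torus) (m k : Fin n → ℤ) :
    TBα g (affineForm s m, k) = (affineForm (s - ∑ i, m i • (g i : Torus)) m, k) :=
  Prod.ext (funext fun c => affineForm_apply_sub s m c fun i => (g i : Torus)) rfl

theorem releRf_TDα (x : TDG n) (h : TDH n) :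
    releRf (TDα x h) = TBα (releRφ x) (releRf h) :=
  calc
    releRf (TDα x h) = (affineForm (h.2 - (TDpair x (TDt h) : Torus)) h.1.1, h.1.2) := rfl
    _ = (affineForm (h.2 - ∑ i, h.1.1 i • (x.2 i : Torus)) h.1.1, h.1.2) := by
      rw [coe_TDpair_TDt]
    _ = TBα (releRφ x) (releRf h) := (TBα_affineForm (releRφ x) h.2 h.1.1 h.1.2).symm

theorem releRf_flipη (x x' : TDG n) : releRf (flipη x x') = leleRη x x' :=
  Prod.ext (affineForm_zero_right _) rfl

end ReleR

/-- `releR = (φ, f, 0)` is a strict crossed intertwiner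
`TD[n] → TBFFR[n]`: `φ` and `f` are additive homomorphisms with `φ ∘ t = t' ∘ f`
and `f(α(x,h)) = α'(φ(x), f(h))` (pointwise: `s − â·m + m·c = s + m·(c − â)` in
`𝕋`); moreover the composite `releR ∘ flip`, computed with the composition
formula for crossed intertwiners, equals `leleR` componentwise. -/
theorem releR_strict_and_comp_flip_eq_leleR (n : ℕ) (hn : 1 ≤ n) :
    (∀ x x' : TDG n, releRφ (x + x') = releRφ x + releRφ x') ∧
    (∀ h h' : TDH n, releRf (h + h') = releRf h + releRf h') ∧
    (∀ h : TDH n, releRφ (TDt h) = TBt (releRf h)) ∧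
    (∀ (x : TDG n) (h : TDH n), releRf (TDα x h) = TBα (releRφ x) (releRf h)) ∧
    (∀ x : TDG n, releRφ (flipφ x) = leleRφ x) ∧
    (∀ h : TDH n, releRf (flipf h) = leleRf h) ∧
    (∀ x x' : TDG n, (0 : TBH n) + releRf (flipη x x') = leleRη x x') := by
  refine ⟨fun _ _ => rfl, releRf_add, fun _ => rfl, releRf_TDα, fun _ => rfl, fun _ => rfl,
    fun x x' => ?_⟩
  rw [zero_add, releRf_flipη]
end
end

section
/- The triple leleR = (φ, f, η) with φ(a⊕â) := a, f(m⊕m̂, s) := (τ_{s,m̂}, m), and η(a₁⊕â₁, a₂⊕â₂) := (the constant map with value â₁·a₂ mod ℤ, 0) is a crossed intertwiner TD[n] → TBFFR[n]: (CI1) φ(t(h)) = t'(f(h)); (CI2) the constant m̂·m' ∈ ℤ vanishes in 𝕋 for integer vectors, so η(t(h), t(h')) = 0; (CI4) η(x, t(h)−x) + f(α(x,h)) = η(t(h)−x, x) + α'(φ(x), f(h)), which pointwise at c ∈ 𝕋ⁿ reads â·(m−a) + (s − â·m) + m̂·c = (m̂−â)·a + s + m̂·(c−a) in 𝕋; (CI5)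 η(x₁,x₂) + η(x₁+x₂, x₃) = η(x₂,x₃) + η(x₁, x₂+x₃). -/
noncomputable section

/-!
The map `η` is biadditive, so it satisfies the cocycle identity (CI5). For (CI4), both actions
shift `f h` by a value of `η`: `f (α(x, h)) = f h - η(x, t h)` since `α` lowers the circle component
by `[x, t h]`, and `α'(φ x, f h) = f h - η(t h, x)` since translating the affine character
`c ↦ s + m̂·c` by `a = φ x` lowers it by the constant `m̂·a = [t h, x]`. By biadditivity both sides
of (CI4) are then equal to `f h - η(x, x)`.
-/

theorem add_apply_add_left_eq_add_apply_add_right {A C : Type*} [AddZeroClass A] [AddCommMonoid C]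
    (B : A →+ A →+ C) (x y z : A) : B x y + B (x + y) z = B y z + B x (y + z) := by
  simp only [map_add, AddMonoidHom.add_apply]
  abel

theorem addCircle_coe_intCast {𝕜 : Type*} [AddCommGroupWithOne 𝕜] (k : ℤ) :
    ((k : 𝕜) : AddCircle (1 : 𝕜)) = 0 :=
  (AddCircle.coe_eq_zero_iff 1).2 ⟨k, zsmul_one k⟩

section leleR

variable {n : ℕ}

theorem TDpair_add_left (x y z : TDG n) : TDpair (x + y) z = TDpair x z + TDpair y z :=
  add_dotProduct x.2 y.2 z.1

theorem TDpair_add_right (x y z : TDG n) : TDpair x (y + z) = TDpair x y + TDpair x z :=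
  dotProduct_add x.2 y.1 z.1

theorem coe_TDpair_TDt_left (h : TDH n) (x : TDG n) :
    (TDpair (TDt h) x : Torus) = ∑ i, h.1.2 i • (x.1 i : Torus) := by
  simp only [TDpair, TDt, QuotientAddGroup.mk_sum, ← zsmul_eq_mul, AddCircle.coe_zsmul]

theorem leleRη_add_left (x y z : TDG n) : leleRη (x + y) z = leleRη x z + leleRη y z := by
  ext <;> simp [leleRη, TDpair_add_left]

theorem leleRη_add_right (x y z : TDG n) : leleRη x (y + z) = leleRη x y + leleRη x z := by
  ext <;> simp [leleRη, TDpair_add_right]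

/-- The map `η` of `leleR`, bundled as a biadditive map. -/
def leleRηHom : TDG n →+ TDG n →+ TBH n :=
  .mk' (fun x => .mk' (leleRη x) (leleRη_add_right x))
    fun x y => AddMonoidHom.ext (leleRη_add_left x y)

theorem leleRη_sub_left (x y z : TDG n) : leleRη (x - y) z = leleRη x z - leleRη y z :=
  DFunLike.congr_fun (map_sub leleRηHom x y) z

theorem leleRη_sub_right (x y z : TDG n) : leleRη x (y - z) = leleRη x y - leleRη x z :=
  map_sub (leleRηHom x) y z

theorem TBt_leleRη (x y : TDG n) : TBt (leleRη x y) = 0 := by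
  ext
  simp [TBt, leleRη]

theorem leleRη_TDt_TDt (h h' : TDH n) : leleRη (TDt h) (TDt h') = 0 := by
  simp only [leleRη, TDpair_TDt_TDt, addCircle_coe_intCast]
  rfl

theorem leleRf_add (h h' : TDH n) : leleRf (h + h') = leleRf h + leleRf h' := by
  ext c
  · simp only [leleRf, Prod.fst_add, Prod.snd_add, Pi.add_apply, add_smul, Finset.sum_add_distrib]
    abel
  · simp [leleRf]

theorem leleRf_TDα (x : TDG n) (h : TDH n) : leleRf (TDα x h) = leleRf h - leleRη x (TDt h) := by
  ext c
  · simp only [leleRf, TDα, leleRη, Prod.fst_sub, Pi.sub_apply]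
    abel
  · simp [leleRf, TDα, leleRη]

theorem TBα_leleRφ_leleRf (x : TDG n) (h : TDH n) :
    TBα (leleRφ x) (leleRf h) = leleRf h - leleRη (TDt h) x := by
  ext c
  · simp only [TBα, leleRφ, leleRf, leleRη, Prod.fst_sub, Pi.sub_apply, coe_TDpair_TDt_left,
      smul_sub, Finset.sum_sub_distrib]
    abel
  · simp [TBα, leleRf, leleRη]

theorem leleRη_add_leleRf_TDα (x : TDG n) (h : TDH n) :
    leleRη x (TDt h - x) + leleRf (TDα x h) =
      leleRη (TDt h - x) x + TBα (leleRφ x) (leleRf h) :=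
  calc
    leleRη x (TDt h - x) + leleRf (TDα x h) = leleRf h - leleRη x x := by
      rw [leleRη_sub_right, leleRf_TDα]
      abel
    _ = leleRη (TDt h - x) x + TBα (leleRφ x) (leleRf h) := by
      rw [leleRη_sub_left, TBα_leleRφ_leleRf]
      abel

end leleR

/-- `leleR = (φ, f, η)` is a crossed intertwiner
`TD[n] → TBFFR[n]`: `φ` and `f` are additive homomorphisms, `η` takes values in
`ker t'`, and the axioms (CI1) `φ(t(h)) = t'(f(h))`; (CI2) `η(t(h),t(h')) = 0`;
(CI4) `η(x, t(h)−x) + f(α(x,h)) = η(t(h)−x, x) + α'(φ(x), f(h))`;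
(CI5) `η(x₁,x₂) + η(x₁+x₂,x₃) = η(x₂,x₃) + η(x₁, x₂+x₃)` all hold. -/
theorem leleR_is_crossed_intertwiner (n : ℕ) (hn : 1 ≤ n) :
    (∀ x x' : TDG n, leleRφ (x + x') = leleRφ x + leleRφ x') ∧
    (∀ h h' : TDH n, leleRf (h + h') = leleRf h + leleRf h') ∧
    (∀ x x' : TDG n, TBt (leleRη x x') = 0) ∧
    (∀ h : TDH n, leleRφ (TDt h) = TBt (leleRf h)) ∧
    (∀ h h' : TDH n, leleRη (TDt h) (TDt h') = 0) ∧
    (∀ (x : TDG n) (h : TDH n),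
        leleRη x (TDt h - x) + leleRf (TDα x h) =
          leleRη (TDt h - x) x + TBα (leleRφ x) (leleRf h)) ∧
    (∀ x₁ x₂ x₃ : TDG n,
        leleRη x₁ x₂ + leleRη (x₁ + x₂) x₃ = leleRη x₂ x₃ + leleRη x₁ (x₂ + x₃)) :=
  ⟨fun _ _ => rfl, leleRf_add, TBt_leleRη, fun _ => rfl, leleRη_TDt_TDt, leleRη_add_leleRf_TDα,
    add_apply_add_left_eq_add_apply_add_right leleRηHom⟩
end
end
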